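/- The graphs K₅, K₃ ∪ K₂, and C₅ are pairwise locally equienergetic: e(K₅) = e(K₃ ∪ K₂) = e(C₅). -/

import Mathlib

open SimpleGraph Matrix Finset

noncomputable section

/-- The adjacency matrix of a simple graph over `ℝ` is Hermitian. -/
lemma adjMatrix_isHermitian {V : Type*} [Fintype V] (G : SimpleGraph V)
    [DecidableRel G.Adj] : (G.adjMatrix ℝ).IsHermitian := by
  rw [Matrix.IsHermitian, Matrix.conjTranspose_eq_transpose_of_trivial]
  exact G.isSymm_adjMatrix

/-- The energy of a finite simple graph: the sum of the absolute values of the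
eigenvalues of its adjacency matrix. -/
def graphEnergy {V : Type*} [Fintype V] [DecidableEq V] (G : SimpleGraph V) : ℝ :=
  letI := Classical.decRel G.Adj
  ∑ i, |(adjMatrix_isHermitian G).eigenvalues i|

/-- The local energy of `G` at a vertex `v`: the energy of `G` minus the energy of the
induced subgraph obtained by deleting `v`. -/
def localEnergyAt {V : Type*} [Fintype V] [DecidableEq V] (G : SimpleGraph V) (v : V) : ℝ :=
  graphEnergy G - graphEnergy (G.induce {u | u ≠ v})

/-- The local energy of `G`: the sum of the local energies at all vertices. -/
def localEnergy {V : Type*} [Fintype V] [DecidableEq V] (G : SimpleGraph V) : ℝ :=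
  ∑ v, localEnergyAt G v

end

/-!
Deleting a vertex of `K_n` lowers the energy from `2 (n - 1)` to `2 (n - 2)`, so `e(K_n) = 2 n`, and
local energy is additive over disjoint unions. For odd `n` also `e(C_n) = 2 n`: the eigenvalues of
`C_n` are `2 cos (2 k π / n)` for `0 ≤ k < n`, those of the path `C_n - v` are `2 cos (k π / n)` for
`0 < k < n`. Up to sign, `cos (k π / n)` depends only on `k` modulo `n`, and doubling permutes the
residues modulo `n`. So the two spectra have the same absolute values, apart from the additional
eigenvalue `2` of `C_n`, and every vertex of `C_n` has local energy `2`.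
-/

open scoped Real

section Energy

open Polynomial (X C)

variable {V W : Type*} [Fintype V] [DecidableEq V] [Fintype W] [DecidableEq W]
  {G : SimpleGraph V} {H : SimpleGraph W}

lemma graphEnergy_eq_sum_abs_roots_charpoly (G : SimpleGraph V) [DecidableRel G.Adj] :
    graphEnergy G = ((G.adjMatrix ℝ).charpoly.roots.map (|·|)).sum := by
  have hroots := (adjMatrix_isHermitian G).roots_charpoly_eq_eigenvalues
  rw [hroots, Multiset.map_map, sum_map_val, graphEnergy]
  congr! with i
  simp only [RCLike.ofReal_real_eq_id, CompTriple.comp_eq, Function.comp_apply]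
  congr!

lemma graphEnergy_congr (φ : G ≃g H) : graphEnergy G = graphEnergy H := by
  classical
  rw [graphEnergy_eq_sum_abs_roots_charpoly H, ← Iso.reindex_adjMatrix ℝ φ, charpoly_reindex,
    graphEnergy_eq_sum_abs_roots_charpoly G]

lemma graphEnergy_eq_sum_abs_of_charpoly_eq_prod [DecidableRel G.Adj] {ι : Type*} {s : Finset ι}
    {μ : ι → ℝ} (h : (G.adjMatrix ℝ).charpoly = ∏ i ∈ s, (X - C (μ i))) :
    graphEnergy G = ∑ i ∈ s, |μ i| := by
  rw [graphEnergy_eq_sum_abs_roots_charpoly, h,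
    Polynomial.roots_prod _ _ (prod_ne_zero_iff.2 fun i _ => Polynomial.X_sub_C_ne_zero (μ i))]
  simp [Multiset.bind_singleton]

lemma graphEnergy_sum (G : SimpleGraph V) (H : SimpleGraph W) :
    graphEnergy (G ⊕g H) = graphEnergy G + graphEnergy H := by
  classical
  have hblocks : (G ⊕g H).adjMatrix ℝ = fromBlocks (G.adjMatrix ℝ) 0 0 (H.adjMatrix ℝ) := by
    ext (_ | _) (_ | _) <;> simp [adjMatrix_apply]
  have hne : (G.adjMatrix ℝ).charpoly * (H.adjMatrix ℝ).charpoly ≠ 0 :=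
    mul_ne_zero (charpoly_monic _).ne_zero (charpoly_monic _).ne_zero
  simp only [graphEnergy_eq_sum_abs_roots_charpoly, hblocks, charpoly_fromBlocks_zero₁₂,
    Polynomial.roots_mul hne, Multiset.map_add, Multiset.sum_add]

lemma localEnergyAt_congr (φ : G ≃g H) (v : V) : localEnergyAt G v = localEnergyAt H (φ v) := by
  have hbij : Set.BijOn φ {u | u ≠ v} {u | u ≠ φ v} := by
    refine ⟨fun u hu => φ.injective.ne hu, φ.injective.injOn, fun w hw => ⟨φ.symm w, ?_, by simp⟩⟩
    rintro rfl
    simp at hw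
  rw [localEnergyAt, localEnergyAt, graphEnergy_congr φ, graphEnergy_congr (φ.induce hbij)]

lemma localEnergyAt_sum_inl (G : SimpleGraph V) (H : SimpleGraph W) (v : V) :
    localEnergyAt (G ⊕g H) (.inl v) = localEnergyAt G v := by
  let φ : (G ⊕g H).induce {u | u ≠ .inl v} ≃g G.induce {u | u ≠ v} ⊕g H :=
    { toEquiv := Equiv.subtypeSum.trans
        (.sumCongr (.subtypeEquivRight (by simp)) (.subtypeUnivEquiv (by simp)))
      map_rel_iff' := by rintro ⟨_ | _, _⟩ ⟨_ | _, _⟩ <;> simp [Equiv.subtypeSum] }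
  rw [localEnergyAt, localEnergyAt, graphEnergy_congr φ, graphEnergy_sum, graphEnergy_sum,
    add_sub_add_right_eq_sub]

lemma localEnergyAt_sum_inr (G : SimpleGraph V) (H : SimpleGraph W) (w : W) :
    localEnergyAt (G ⊕g H) (.inr w) = localEnergyAt H w :=
  (localEnergyAt_congr Iso.sumComm (.inr w)).trans (localEnergyAt_sum_inl H G w)

lemma localEnergy_sum (G : SimpleGraph V) (H : SimpleGraph W) :
    localEnergy (G ⊕g H) = localEnergy G + localEnergy H := by
  simp only [localEnergy, Fintype.sum_sum_type, localEnergyAt_sum_inl, localEnergyAt_sum_inr]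

end Energy

section CompleteGraph

open Polynomial (X C)

variable {V : Type*} [Fintype V] [DecidableEq V]

lemma charpoly_adjMatrix_top [Nonempty V] {R : Type*} [CommRing R] :
    ((⊤ : SimpleGraph V).adjMatrix R).charpoly =
      (X + 1) ^ (Fintype.card V - 1) * (X - C (Fintype.card V - 1 : R)) := by
  have hones : (⊤ : SimpleGraph V).adjMatrix R = vecMulVec 1 1 - scalar V 1 := by
    ext i j
    obtain rfl | hij := eq_or_ne i j <;> simp [*]
  obtain ⟨n, hn⟩ := Nat.exists_eq_succ_of_ne_zero (Fintype.card_ne_zero (α := V))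
  rw [hones, charpoly_sub_scalar, charpoly_vecMulVec]
  simp only [hn, Nat.succ_eq_add_one, one_dotProduct_one, Nat.cast_add, Nat.cast_one,
    add_tsub_cancel_right, Polynomial.smul_eq_C_mul, map_add, map_natCast, map_one,
    Polynomial.sub_comp, Polynomial.pow_comp, Polynomial.X_comp, Polynomial.mul_comp,
    Polynomial.add_comp, Polynomial.natCast_comp, Polynomial.one_comp, add_sub_cancel_right]
  ring

lemma graphEnergy_top [Nonempty V] :
    graphEnergy (⊤ : SimpleGraph V) = 2 * (Fintype.card V - 1) := by
  have hcard : (1 : ℝ) ≤ Fintype.card V := mod_cast Fintype.card_pos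
  have hX : (X + 1 : Polynomial ℝ) = X - C (-1) := by simp
  have hroots : ((⊤ : SimpleGraph V).adjMatrix ℝ).charpoly.roots =
      (Fintype.card V - 1) • {-1} + {(Fintype.card V - 1 : ℝ)} := by
    rw [charpoly_adjMatrix_top, hX, Polynomial.roots_mul, Polynomial.roots_pow,
      Polynomial.roots_X_sub_C, Polynomial.roots_X_sub_C]
    exact mul_ne_zero (pow_ne_zero _ (Polynomial.X_sub_C_ne_zero _))
      (Polynomial.X_sub_C_ne_zero _)
  rw [graphEnergy_eq_sum_abs_roots_charpoly, hroots, Multiset.map_add, Multiset.map_nsmul,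
    Multiset.map_singleton, Multiset.map_singleton, Multiset.sum_add, Multiset.sum_nsmul,
    Multiset.sum_singleton, Multiset.sum_singleton, abs_neg, abs_one, nsmul_one,
    abs_of_nonneg (sub_nonneg.2 hcard), Nat.cast_pred Fintype.card_pos, two_mul]

lemma localEnergyAt_top [Nontrivial V] (v : V) : localEnergyAt (⊤ : SimpleGraph V) v = 2 := by
  have : Nonempty {u | u ≠ v} := nonempty_subtype.2 (exists_ne v)
  have hcard : (Fintype.card {u | u ≠ v} : ℝ) = Fintype.card V - 1 := by
    rw [Set.card_ne_eq, Nat.cast_pred Fintype.card_pos]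
  rw [localEnergyAt, induce_top, graphEnergy_top, graphEnergy_top, hcard]
  ring

lemma localEnergy_top [Nontrivial V] :
    localEnergy (⊤ : SimpleGraph V) = 2 * Fintype.card V := by
  simp [localEnergy, localEnergyAt_top, mul_comm]

end CompleteGraph

section PathGraph

open Polynomial (X C)
open Polynomial.Chebyshev (S U)

instance (n : ℕ) : DecidableRel (pathGraph n).Adj :=
  fun _ _ => decidable_of_iff _ pathGraph_adj.symm

lemma det_eq_mul_sub_mul_of_first_row_col_eq_zero {R : Type*} [CommRing R] {n : ℕ}
    (A : Matrix (Fin (n + 2)) (Fin (n + 2)) R) (hrow : ∀ j : Fin n, A 0 j.succ.succ = 0)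
    (hcol : ∀ i : Fin n, A i.succ.succ 0 = 0) :
    A.det = A 0 0 * (A.submatrix Fin.succ Fin.succ).det -
      A 0 1 * A 1 0 * (A.submatrix (Fin.succ ∘ Fin.succ) (Fin.succ ∘ Fin.succ)).det := by
  have hminor : (A.submatrix Fin.succ (Fin.succAbove 1)).det =
      A 1 0 * (A.submatrix (Fin.succ ∘ Fin.succ) (Fin.succ ∘ Fin.succ)).det := by
    have hsub : (Fin.succAbove 1 ∘ Fin.succ : Fin n → Fin (n + 2)) = Fin.succ ∘ Fin.succ := by
      ext1 i
      simp
    simp [det_succ_column_zero, Fin.sum_univ_succ, hcol, hsub]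
  simp only [det_succ_row_zero A, Nat.succ_eq_add_one, Fin.sum_univ_succ, Fin.coe_ofNat_eq_mod,
    Nat.zero_mod, pow_zero, one_mul, Fin.succAbove_zero, Fin.val_succ, zero_add, pow_one,
    Fin.succ_zero_eq_one, neg_mul, hminor, hrow, mul_zero, zero_mul, sum_const_zero, add_zero]
  ring

lemma charmatrix_adjMatrix_pathGraph_apply (R : Type*) [CommRing R] {n : ℕ} (i j : Fin n) :
    charmatrix ((pathGraph n).adjMatrix R) i j =
      if i = j then X else if i.val + 1 = j.val ∨ j.val + 1 = i.val then -1 else 0 := by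
  obtain rfl | hij := eq_or_ne i j
  · simp
  · simp only [charmatrix_apply_ne _ _ _ hij, adjMatrix_apply, pathGraph_adj, if_neg hij]
    split_ifs <;> simp

lemma charpoly_adjMatrix_pathGraph_add_two (R : Type*) [CommRing R] (n : ℕ) :
    ((pathGraph (n + 2)).adjMatrix R).charpoly =
      X * ((pathGraph (n + 1)).adjMatrix R).charpoly - ((pathGraph n).adjMatrix R).charpoly := by
  have hsucc (k : ℕ) :
      (charmatrix ((pathGraph (k + 1)).adjMatrix R)).submatrix Fin.succ Fin.succ =
        charmatrix ((pathGraph k).adjMatrix R) := by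
    ext1 i j
    simp only [submatrix_apply, charmatrix_adjMatrix_pathGraph_apply, Fin.val_succ, Fin.succ_inj,
      add_left_inj]
  have hsucc₂ : (charmatrix ((pathGraph (n + 2)).adjMatrix R)).submatrix
      (Fin.succ ∘ Fin.succ) (Fin.succ ∘ Fin.succ) = charmatrix ((pathGraph n).adjMatrix R) := by
    rw [← submatrix_submatrix, hsucc, hsucc]
  rw [charpoly, det_eq_mul_sub_mul_of_first_row_col_eq_zero, hsucc, hsucc₂, ← charpoly, ← charpoly]
  · simp [pathGraph_adj]
  · intro j
    rw [charmatrix_adjMatrix_pathGraph_apply]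
    simp [Fin.ext_iff]
  · intro i
    rw [charmatrix_adjMatrix_pathGraph_apply]
    simp

lemma charpoly_adjMatrix_pathGraph (R : Type*) [CommRing R] :
    ∀ n : ℕ, ((pathGraph n).adjMatrix R).charpoly = S R n
  | 0 => by simp
  | 1 => by simp [charpoly]
  | n + 2 => by
    rw [charpoly_adjMatrix_pathGraph_add_two, charpoly_adjMatrix_pathGraph R n,
      charpoly_adjMatrix_pathGraph R (n + 1), Nat.cast_add, Nat.cast_add, Nat.cast_one,
      Nat.cast_ofNat, Polynomial.Chebyshev.S_add_two]

lemma roots_chebyshev_S_real (n : ℕ) :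
    (S ℝ n).roots = (Multiset.range n).map fun k : ℕ => 2 * Real.cos ((k + 1) * π / (n + 1)) := by
  have hU : (S ℝ n).comp (C 2 * X + C 0) = U ℝ n := by
    rw [Polynomial.C_0, add_zero]
    exact Polynomial.Chebyshev.S_comp_two_mul_X ℝ n
  have hinj := (range n).nodup_map_iff_injOn.1 (Polynomial.Chebyshev.roots_U_real_nodup n)
  rw [← Polynomial.map_roots_comp_C_mul_X_add_C (S ℝ n) 2 0 (by simp), hU,
    Polynomial.Chebyshev.roots_U_real, Finset.image_val_of_injOn hinj]
  simp

lemma graphEnergy_pathGraph (n : ℕ) :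
    graphEnergy (pathGraph n) =
      ∑ k ∈ range n, |2 * Real.cos ((k + 1) * π / (n + 1))| := by
  rw [graphEnergy_eq_sum_abs_roots_charpoly, charpoly_adjMatrix_pathGraph,
    roots_chebyshev_S_real, Multiset.map_map]
  rfl

end PathGraph

section CycleGraph

open Polynomial (X C)

lemma charpoly_circulant {K : Type*} [Field K] {n : ℕ} [NeZero n] {ζ : K}
    (hζ : IsPrimitiveRoot ζ n) (c : Fin n → K) :
    (circulant c).charpoly = ∏ k : Fin n, (X - C (∑ j, c j * (ζ ^ k.val) ^ j.val)) := by
  set F : Matrix (Fin n) (Fin n) K := vandermonde fun k => ζ ^ k.val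
  set D : Matrix (Fin n) (Fin n) K := diagonal fun k => ∑ j, c j * (ζ ^ k.val) ^ j.val
  have hF : IsUnit F := by
    rw [isUnit_iff_isUnit_det, isUnit_iff_ne_zero, det_vandermonde_ne_zero_iff]
    exact fun k l hkl => Fin.ext (hζ.pow_inj k.isLt l.isLt hkl)
  have hroot (k i j : Fin n) :
      (ζ ^ k.val) ^ (i + j).val = (ζ ^ k.val) ^ i.val * (ζ ^ k.val) ^ j.val := by
    have hpow : (ζ ^ k.val) ^ n = 1 := by rw [pow_right_comm, hζ.pow_eq_one, one_pow]
    rw [← pow_add, Fin.val_add, ← pow_eq_pow_mod _ hpow]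
  have hdiag : F * circulant c = D * F := by
    ext k j
    rw [mul_apply, diagonal_mul, sum_mul, ← Equiv.sum_comp (Equiv.addRight j)]
    refine sum_congr rfl fun i _ => ?_
    simp only [F, vandermonde_apply, circulant_apply, Equiv.coe_addRight, add_sub_cancel_right,
      hroot]
    ring
  obtain ⟨u, hu⟩ := hF
  have hconj : D = u * circulant c * u⁻¹ := by
    rw [hu, hdiag, ← hu, Units.mul_inv_cancel_right]
  rw [← charpoly_units_conj u, ← coe_units_inv, ← hconj, charpoly_diagonal]

lemma adjMatrix_cycleGraph_eq_circulant (R : Type*) [AddMonoidWithOne R] (n : ℕ) :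
    (cycleGraph (n + 3)).adjMatrix R = circulant (Pi.single 1 1 + Pi.single (-1) 1) := by
  have hne : (1 : Fin (n + 3)) ≠ -1 := by
    simp [Fin.ext_iff, Fin.coe_neg_one]
  ext i j
  have hadj : (cycleGraph (n + 3)).Adj i j ↔ i - j = 1 ∨ i - j = -1 := by
    rw [cycleGraph_adj, ← neg_sub i j, neg_eq_iff_eq_neg]
  simp only [adjMatrix_apply, circulant_apply, Pi.add_apply, Pi.single_apply, hadj]
  split_ifs <;> simp_all

lemma charpoly_adjMatrix_cycleGraph_of_isPrimitiveRoot {K : Type*} [Field K] {n : ℕ} {ζ : K}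
    (hζ : IsPrimitiveRoot ζ n) (hn : 3 ≤ n) :
    ((cycleGraph n).adjMatrix K).charpoly = ∏ k ∈ range n, (X - C (ζ ^ k + (ζ ^ k)⁻¹)) := by
  obtain ⟨m, rfl⟩ := Nat.exists_eq_add_of_le' hn
  have hinv (k : ℕ) : (ζ ^ k) ^ (m + 2) = (ζ ^ k)⁻¹ := by
    apply eq_inv_of_mul_eq_one_left
    rw [← pow_succ, pow_right_comm, hζ.pow_eq_one, one_pow]
  rw [adjMatrix_cycleGraph_eq_circulant, charpoly_circulant hζ, prod_range]
  simp [add_mul, sum_add_distrib, Pi.single_apply, Fin.coe_neg_one, hinv]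

lemma charpoly_adjMatrix_cycleGraph {n : ℕ} (hn : 3 ≤ n) :
    ((cycleGraph n).adjMatrix ℝ).charpoly =
      ∏ k ∈ range n, (X - C (2 * Real.cos (2 * k * π / n))) := by
  have hζ := Complex.isPrimitiveRoot_exp n (by lia)
  have hcos (k : ℕ) : Complex.exp (2 * π * Complex.I / n) ^ k +
      (Complex.exp (2 * π * Complex.I / n) ^ k)⁻¹ = (2 * Real.cos (2 * k * π / n) : ℝ) := by
    rw [← Complex.exp_nat_mul, ← Complex.exp_neg]
    push_cast
    rw [Complex.two_cos]
    congr 2 <;> ring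
  have hmap : ((cycleGraph n).adjMatrix ℝ).map Complex.ofRealHom = (cycleGraph n).adjMatrix ℂ := by
    ext i j
    simp [adjMatrix_apply, apply_ite]
  apply Polynomial.map_injective _ Complex.ofRealHom.injective
  rw [← charpoly_map, hmap, charpoly_adjMatrix_cycleGraph_of_isPrimitiveRoot hζ hn,
    Polynomial.map_prod]
  simp only [hcos, Polynomial.map_sub, Polynomial.map_X, Polynomial.map_C, Complex.ofRealHom_eq_coe]

lemma graphEnergy_cycleGraph {n : ℕ} (hn : 3 ≤ n) :
    graphEnergy (cycleGraph n) = ∑ k ∈ range n, |2 * Real.cos (2 * k * π / n)| :=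
  graphEnergy_eq_sum_abs_of_charpoly_eq_prod (charpoly_adjMatrix_cycleGraph hn)

lemma sum_abs_cos_two_mul_of_odd {n : ℕ} (hn : Odd n) :
    ∑ k ∈ range n, |Real.cos (2 * k * π / n)| = ∑ k ∈ range n, |Real.cos (k * π / n)| := by
  have hpos : 0 < n := hn.pos
  have hperiod (k : ℕ) : |Real.cos ((k % n : ℕ) * π / n)| = |Real.cos (k * π / n)| := by
    have hsplit : k * π / n = (k % n : ℕ) * π / n + (k / n : ℕ) * π := by
      nth_rw 1 [← Nat.mod_add_div k n]
      push_cast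
      field_simp
    rw [hsplit, Real.cos_add_nat_mul_pi, abs_mul, abs_pow, abs_neg, abs_one, one_pow, one_mul]
  have hmaps : Set.MapsTo (fun k => 2 * k % n) (range n) (range n) := fun k _ => by
    simpa using Nat.mod_lt _ hpos
  have hinj : Set.InjOn (fun k => 2 * k % n) (range n) := fun k hk l hl hkl => by
    have hmod : k ≡ l [MOD n] := Nat.ModEq.cancel_left_of_coprime hn.coprime_two_right hkl
    exact hmod.eq_of_lt_of_lt (mem_range.1 hk) (mem_range.1 hl)
  refine sum_nbij (fun k => 2 * k % n) hmaps hinj (surjOn_of_injOn_of_card_le _ hmaps hinj le_rfl)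
    fun k _ => ?_
  rw [hperiod, Nat.cast_mul, Nat.cast_ofNat]

lemma graphEnergy_cycleGraph_of_odd {n : ℕ} (hn : 2 ≤ n) (hodd : Odd (n + 1)) :
    graphEnergy (cycleGraph (n + 1)) = graphEnergy (pathGraph n) + 2 :=
  calc graphEnergy (cycleGraph (n + 1))
      = 2 * ∑ k ∈ range (n + 1), |Real.cos (2 * k * π / (n + 1 : ℕ))| := by
        simp [graphEnergy_cycleGraph (Nat.succ_le_succ hn), abs_mul, mul_sum]
    _ = 2 * ∑ k ∈ range (n + 1), |Real.cos (k * π / (n + 1 : ℕ))| := by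
        rw [sum_abs_cos_two_mul_of_odd hodd]
    _ = graphEnergy (pathGraph n) + 2 := by
        simp [graphEnergy_pathGraph, sum_range_succ' _ n, abs_mul, mul_add, mul_sum]

/-- Deleting the vertex `0` of a cycle leaves a path, whose vertex `i` is the vertex `i + 1` of the
cycle. -/
def pathGraphIsoInduceCycleGraph (n : ℕ) :
    pathGraph n ≃g (cycleGraph (n + 1)).induce {u | u ≠ 0} where
  toEquiv := finSuccAboveEquiv 0
  map_rel_iff' {i j} := by
    have hsub (k l : Fin n) : (k.succ - l.succ).val = 1 ↔ l.val + 1 = k.val := by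
      obtain hlk | hkl := le_or_gt l k
      · rw [Fin.coe_sub_iff_le.2 (Fin.succ_le_succ_iff.2 hlk), Fin.val_succ, Fin.val_succ]
        lia
      · rw [Fin.coe_sub_iff_lt.2 (Fin.succ_lt_succ_iff.2 hkl), Fin.val_succ, Fin.val_succ]
        lia
    change (cycleGraph (n + 1)).Adj i.succ j.succ ↔ (pathGraph n).Adj i j
    rw [cycleGraph_adj', pathGraph_adj, hsub, hsub, or_comm]

lemma localEnergyAt_cycleGraph_of_odd {n : ℕ} (hn : 3 ≤ n) (hodd : Odd n) (v : Fin n) :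
    localEnergyAt (cycleGraph n) v = 2 := by
  obtain ⟨m, rfl⟩ := Nat.exists_eq_add_of_le' (Nat.one_le_of_lt hn)
  let rotation : cycleGraph (m + 1) ≃g cycleGraph (m + 1) :=
    { toEquiv := Equiv.addRight v
      map_rel_iff' := by simp [cycleGraph_eq_circulantGraph] }
  have hrotation : rotation 0 = v := zero_add v
  rw [← hrotation, ← localEnergyAt_congr, localEnergyAt,
    graphEnergy_cycleGraph_of_odd (Nat.le_of_succ_le_succ hn) hodd,
    graphEnergy_congr (pathGraphIsoInduceCycleGraph m), add_sub_cancel_left]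

lemma localEnergy_cycleGraph_of_odd {n : ℕ} (hn : 3 ≤ n) (hodd : Odd n) :
    localEnergy (cycleGraph n) = 2 * n := by
  simp [localEnergy, localEnergyAt_cycleGraph_of_odd hn hodd, mul_comm]

end CycleGraph

theorem localEnergy_K5_eq_general {m n : ℕ} (hm : 2 ≤ m) (hn : 2 ≤ n) (hodd : Odd (m + n)) :
    localEnergy (⊤ : SimpleGraph (Fin (m + n))) =
      localEnergy ((⊤ : SimpleGraph (Fin m)) ⊕g (⊤ : SimpleGraph (Fin n))) ∧
    localEnergy ((⊤ : SimpleGraph (Fin m)) ⊕g (⊤ : SimpleGraph (Fin n))) =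
      localEnergy (cycleGraph (m + n)) := by
  have hcomplete {k : ℕ} (hk : 2 ≤ k) : localEnergy (⊤ : SimpleGraph (Fin k)) = 2 * k := by
    have : Nontrivial (Fin k) := Fin.nontrivial_iff_two_le.2 hk
    rw [localEnergy_top, Fintype.card_fin]
  rw [localEnergy_sum, localEnergy_cycleGraph_of_odd (by lia) hodd, hcomplete hm, hcomplete hn,
    hcomplete (by lia), Nat.cast_add, mul_add]
  exact ⟨rfl, rfl⟩

/-- `e(K₅) = e(K₃ ∪ K₂) = e(C₅)`. -/
theorem localEnergy_K5_eq :
    localEnergy (⊤ : SimpleGraph (Fin 5)) =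
      localEnergy ((⊤ : SimpleGraph (Fin 3)) ⊕g (⊤ : SimpleGraph (Fin 2))) ∧
    localEnergy ((⊤ : SimpleGraph (Fin 3)) ⊕g (⊤ : SimpleGraph (Fin 2))) =
      localEnergy (cycleGraph 5) :=
  localEnergy_K5_eq_general (m := 3) (n := 2) (by decide) (by decide) (by decide)
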